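/- arXiv:2005.13777 — 2 statements merged into one kernel-verified Lean document; each statement's English description precedes it below -/
import Mathlib

section
/- For equivalence relations E and F on ℕ, if E is computably reducible to F then E⁺ is computably reducible to F⁺. -/
/-- The `e`-th partial computable function. -/
def phi (e : ℕ) : ℕ →. ℕ :=
  Nat.Partrec.Code.eval (Denumerable.ofNat Nat.Partrec.Code e)

/-- `W_e`, the `e`-th c.e. set: the domain of `φ_e`. -/
def WSet (e : ℕ) : Set ℕ := (phi e).Dom

/-- The `E`-equivalence class of `k`. -/
def classOf (E : ℕ → ℕ → Prop) (k : ℕ) : Set ℕ := {x | E k x}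

/-- Computable reducibility of binary relations on ℕ. -/
def Reduces (E F : ℕ → ℕ → Prop) : Prop :=
  ∃ f : ℕ → ℕ, Computable f ∧ ∀ m n, E m n ↔ F (f m) (f n)

/-- The computable FS-jump of `E`: `e E⁺ e'` iff the set of `E`-classes of elements
of `ran φ_e` equals the set of `E`-classes of elements of `ran φ_{e'}`. -/
def FSJump (E : ℕ → ℕ → Prop) : ℕ → ℕ → Prop :=
  fun e e' => classOf E '' (phi e).ran = classOf E '' (phi e').ran

theorem classOf_eq_iff {E : ℕ → ℕ → Prop} (hE : Equivalence E) (a b : ℕ) :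
    classOf E a = classOf E b ↔ E a b := by
  constructor
  · intro h
    have hb : b ∈ classOf E b := hE.refl b
    rw [← h] at hb
    exact hb
  · intro h
    ext x
    exact ⟨fun hx => hE.trans (hE.symm h) hx, fun hx => hE.trans h hx⟩

theorem fsJump_iff {E : ℕ → ℕ → Prop} (hE : Equivalence E) (e e' : ℕ) :
    FSJump E e e' ↔ (∀ x ∈ (phi e).ran, ∃ y ∈ (phi e').ran, E y x) ∧
      (∀ x ∈ (phi e').ran, ∃ y ∈ (phi e).ran, E y x) := by
  unfold FSJump
  rw [Set.Subset.antisymm_iff, Set.image_subset_iff, Set.image_subset_iff]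
  simp only [Set.subset_def, Set.mem_preimage, Set.mem_image, classOf_eq_iff hE]

/-- If `E ≤ F` then `E⁺ ≤ F⁺`. -/
theorem jump_monotone (E F : ℕ → ℕ → Prop) (hE : Equivalence E) (hF : Equivalence F)
    (h : Reduces E F) :
    Reduces (FSJump E) (FSJump F) := by
  obtain ⟨f, hf, hfE⟩ := h
  obtain ⟨c, hc⟩ := Nat.Partrec.Code.exists_code.1 (Partrec.nat_iff.1 hf.partrec)
  have hran : ∀ e, (phi (Encodable.encode
      (Nat.Partrec.Code.comp c (Denumerable.ofNat Nat.Partrec.Code e)))).ran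
        = f '' (phi e).ran := by
    intro e
    have key : ∀ n y, y ∈ phi (Encodable.encode
        (Nat.Partrec.Code.comp c (Denumerable.ofNat Nat.Partrec.Code e))) n ↔
          ∃ x ∈ phi e n, y = f x := by
      intro n y
      unfold phi
      rw [Denumerable.ofNat_encode]
      change y ∈ ((Denumerable.ofNat Nat.Partrec.Code e).eval n).bind c.eval ↔ _
      rw [hc]
      refine Part.mem_bind_iff.trans ?_
      exact exists_congr fun x => and_congr_right fun _ => Part.mem_some_iff
    ext y
    constructor
    · rintro ⟨n, hn⟩
      obtain ⟨x, hx, rfl⟩ := (key n y).1 hn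
      exact ⟨x, ⟨n, hx⟩, rfl⟩
    · rintro ⟨x, ⟨n, hx⟩, rfl⟩
      exact ⟨n, (key n _).2 ⟨x, hx, rfl⟩⟩
  refine ⟨fun e => Encodable.encode
      (Nat.Partrec.Code.comp c (Denumerable.ofNat Nat.Partrec.Code e)), ?_, ?_⟩
  · exact (Primrec.encode.comp (Nat.Partrec.Code.primrec₂_comp.comp (Primrec.const c)
      (Primrec.ofNat Nat.Partrec.Code))).to_comp
  · intro m n
    rw [fsJump_iff hE, fsJump_iff hF, hran, hran]
    simp only [Set.forall_mem_image, Set.exists_mem_image, hfE]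
end

section
/- The computable FS-jump id⁺ of the identity relation on ℕ is computably bireducible with the relation =^{ce} of equality of c.e. sets. -/
/-- Equality of c.e. sets: `e =^{ce} e'` iff `W_e = W_{e'}`. -/
def eqCE : ℕ → ℕ → Prop := fun e e' => WSet e = WSet e'

open Nat.Partrec in
theorem exists_index (g : ℕ → ℕ →. ℕ) (hg : Partrec₂ g) :
    ∃ f : ℕ → ℕ, Computable f ∧ ∀ e, phi (f e) = g e := by
  obtain ⟨c, hc⟩ := Code.exists_code.1 (Partrec₂.unpaired'.2 hg)
  refine ⟨fun e => Encodable.encode (Code.curry c e), ?_, ?_⟩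
  · exact Computable.encode.comp
      ((Code.primrec₂_curry.comp (Primrec.const c) Primrec.id).to_comp)
  · intro e
    funext x
    simp [phi, Code.eval_curry, hc]

theorem fsJump_eq_iff (e e' : ℕ) :
    FSJump (@Eq ℕ) e e' ↔ (phi e).ran = (phi e').ran := by
  have hinj : Function.Injective (classOf (@Eq ℕ)) := by
    intro a b h
    have : b ∈ classOf (@Eq ℕ) a := by rw [h]; exact (rfl : b = b)
    exact this
  exact hinj.image_injective.eq_iff

open Nat.Partrec in
theorem phi_part : Partrec₂ phi :=
  Code.eval_part.comp ((Computable.ofNat Code).comp Computable.fst) Computable.snd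

open Nat.Partrec in
/-- Test whether stage `k` (a pair of input and step bound) shows that `y` is in `ran φ_e`. -/
def stageTest (p : ℕ × ℕ) (k : ℕ) : Bool :=
  decide (Code.evaln k.unpair.2 (Denumerable.ofNat Code p.1) k.unpair.1 = some p.2)

open Nat.Partrec in
theorem stageTest_computable : Computable₂ stageTest := by
  have h : Primrec fun q : (ℕ × ℕ) × ℕ =>
      Code.evaln q.2.unpair.2 (Denumerable.ofNat Code q.1.1) q.2.unpair.1 :=
    Code.primrec_evaln.comp (((Primrec.snd.comp (Primrec.unpair.comp Primrec.snd)).pair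
      ((Primrec.ofNat Code).comp (Primrec.fst.comp Primrec.fst))).pair
      (Primrec.fst.comp (Primrec.unpair.comp Primrec.snd)))
  have h2 : Primrec fun q : (ℕ × ℕ) × ℕ => some q.1.2 :=
    Primrec.option_some.comp (Primrec.snd.comp Primrec.fst)
  have h3 := (Primrec.eq (α := Option ℕ)).comp h h2
  exact (PrimrecPred.decide h3).to_comp

open Nat.Partrec in
theorem stageTest_iff (e y : ℕ) :
    (∃ k, stageTest (e, y) k = true) ↔ y ∈ (phi e).ran := by
  constructor
  · rintro ⟨k, hk⟩
    exact ⟨k.unpair.1, Code.evaln_sound (of_decide_eq_true hk)⟩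
  · rintro ⟨n, hn⟩
    obtain ⟨s, hs⟩ := Code.evaln_complete.1 hn
    exact ⟨Nat.pair n s, decide_eq_true (by simpa using hs)⟩

/-- `id⁺` is computably bireducible with `=^{ce}`. -/
theorem jump_id_bireducible_eqCE :
    Reduces (FSJump (@Eq ℕ)) eqCE ∧ Reduces eqCE (FSJump (@Eq ℕ)) := by
  constructor
  · obtain ⟨f, hf, hfe⟩ := exists_index
      (fun e y => Nat.rfind (fun k => Part.some (stageTest (e, y) k)))
      (Partrec.rfind stageTest_computable.partrec₂)
    have key : ∀ e, WSet (f e) = (phi e).ran := by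
      intro e
      ext y
      rw [← stageTest_iff, WSet, hfe]
      change (Nat.rfind (fun k => Part.some (stageTest (e, y) k))).Dom ↔ _
      refine Nat.rfind_dom.trans ⟨?_, ?_⟩
      · rintro ⟨k, hk, -⟩
        exact ⟨k, (Part.mem_some_iff.1 hk).symm⟩
      · rintro ⟨k, hk⟩
        exact ⟨k, Part.mem_some_iff.2 hk.symm, fun _ => trivial⟩
    refine ⟨f, hf, fun m n => ?_⟩
    rw [fsJump_eq_iff, eqCE, key, key]
  · obtain ⟨f, hf, hfe⟩ := exists_index (fun e n => (phi e n).map (fun _ => n))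
      (Partrec.map (g := fun (p : ℕ × ℕ) (_ : ℕ) => p.2) phi_part
        (Computable.snd.comp Computable.fst))
    have key : ∀ e, (phi (f e)).ran = WSet e := by
      intro e
      ext y
      rw [hfe]
      simp only [PFun.ran, WSet, PFun.mem_dom, Set.mem_ofPred_eq, Part.mem_map_iff]
      constructor
      · rintro ⟨a, b, hb, rfl⟩
        exact ⟨b, hb⟩
      · rintro ⟨b, hb⟩
        exact ⟨y, b, hb, rfl⟩
    refine ⟨f, hf, fun m n => ?_⟩
    rw [fsJump_eq_iff, eqCE, key, key]
end
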